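/- Suppose the complex-valued potential q satisfies condition A for x ≥ 0. If y is a nontrivial solution of −y″ + q y = 0 on ℝ₊ with y(0) = 0 or with y′(0) = 0, then y ∉ L₂(ℝ₊), i.e. ∫₀^∞ |y(x)|² dx = ∞. -/

import Mathlib

/-!
Write `p = √q` and consider the energy `S = Re (ȳ y' / p)`. It is absolutely continuous, vanishes
at `0` under either boundary condition, and almost everywhere

  `S' = Re p (|y|² + |y'/p|²) - Re ((p'/p) ȳ (y'/p)) ≥ (Re p - |p'/p| / 2) (|y|² + |y'/p|²)`,

so condition A gives `S' ≥ C (|y|² + |y'/p|²)` (`energy_pointwise`). Integrating,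

  `C H(x) ≤ S(x) ≤ |y(x)| |y'(x)/p(x)|`,  where `H(x) = ∫₀ˣ (|y|² + |y'/p|²)`.

Since `y` is nontrivial, `H > 0` from some point on, and there
`(C H)² ≤ |y|² |y'/p|² ≤ |y|² H'`, that is, `H' / (C H)² ≥ 1 / |y|²`. Hence the function
`∫₀ˣ |y|² - 1 / (C² H(x))` has derivative at least `|y|² + 1 / |y|² ≥ 2` and is unbounded, which
is impossible if `∫₀^∞ |y|² < ∞` (`not_integrableOn_of_energy`).

The regularity needed to integrate `S'` comes from the fundamental theorem of calculus for
absolutely continuous functions; the only nonroutine factor of `S` is `1 / p` (`ac_inv_sqrtQ`).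
-/

open MeasureTheory Filter Topology Complex

noncomputable section

/-- The open sector `Π_κ = {z ≠ 0 : arg z ∈ (-π+κ, π-κ)}`. -/
def PiSector (κ : ℝ) : Set ℂ :=
  {z : ℂ | z ≠ 0 ∧ -Real.pi + κ < z.arg ∧ z.arg < Real.pi - κ}

/-- `f` is locally absolutely continuous on `[a,∞)` with a.e. derivative `f'`:
`f'` is locally integrable there and `f` is recovered from `f'` by integration. -/
def LocACOn (f f' : ℝ → ℂ) (a : ℝ) : Prop :=
  (∀ b, a ≤ b → IntervalIntegrable f' volume a b) ∧
  ∀ x, a ≤ x → f x = f a + ∫ t in a..x, f' t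

/-- `y` (with first derivative `y'`) is a solution of `-y'' + q y = f` on `ℝ₊`:
`y, y'` are locally absolutely continuous on `[0,∞)` and the a.e. derivative of
`y'` equals `q y - f`. -/
def IsSol (q f y y' : ℝ → ℂ) : Prop :=
  LocACOn y y' 0 ∧ LocACOn y' (fun x => q x * y x - f x) 0

/-- `y` is nontrivial on `ℝ₊`. -/
def NontrivialSol (y : ℝ → ℂ) : Prop := ∃ x, 0 ≤ x ∧ y x ≠ 0

/-- membership in the weighted space `L₂(ℝ₊, w)`. -/
def MemL2 (w : ℝ → ℝ) (f : ℝ → ℂ) : Prop :=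
  AEStronglyMeasurable f (volume.restrict (Set.Ici (0:ℝ))) ∧
  IntegrableOn (fun x => w x * ‖f x‖ ^ 2) (Set.Ici (0:ℝ)) volume

/-- the branch `p = √q` with positive real part (principal branch). -/
def sqrtQ (q : ℝ → ℂ) (x : ℝ) : ℂ := (q x) ^ ((1 : ℂ) / 2)

/-- the a.e. derivative of `sqrtQ q`, where `q'` is the a.e. derivative of `q`. -/
def sqrtQD (q q' : ℝ → ℂ) (x : ℝ) : ℂ := q' x / (2 * sqrtQ q x)

/-- the weight `ρ = Re p - (1/2)|p'/p|`. -/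
def rho (q q' : ℝ → ℂ) (x : ℝ) : ℝ :=
  (sqrtQ q x).re - (1 / 2) * ‖sqrtQD q q' x / sqrtQ q x‖

/-- Condition A for `q` on `[x₀,∞)` with constant `C`, where `q'` is the
a.e. derivative of `q`: `q ∈ L¹loc(ℝ₊)`, `q` is locally absolutely continuous
on `[x₀,∞)`, `q` takes values in a sector `Π_κ` on `[x₀,∞)`, the branch
`p = √q` has positive real part there, and
`Re p ≥ C + (1/2)|p'/p|` a.e. on `[x₀,∞)`. -/
def CondA (q q' : ℝ → ℂ) (x₀ C : ℝ) : Prop :=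
  LocallyIntegrableOn q (Set.Ici (0:ℝ)) volume ∧
  LocACOn q q' x₀ ∧
  (∃ κ, 0 ≤ κ ∧ ∀ x, x₀ ≤ x → q x ∈ PiSector κ) ∧
  (∀ x, x₀ ≤ x → 0 < (sqrtQ q x).re) ∧
  0 < C ∧
  ∀ᵐ x : ℝ, x₀ ≤ x → C + (1 / 2) * ‖sqrtQD q q' x / sqrtQ q x‖ ≤ (sqrtQ q x).re

/-- The set `𝒩` of spectral parameters `lam` such that `q - lam` satisfies
condition A for `x ≥ x₁(lam)` for some `x₁(lam) ≥ 0` (note `(q - lam)' = q'`). -/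
def NSet (q q' : ℝ → ℂ) : Set ℂ :=
  {lam : ℂ | ∃ x₁ C, 0 ≤ x₁ ∧ CondA (fun x => q x - lam) q' x₁ C}

/-- A map dominated incrementwise by an absolutely continuous map is absolutely continuous. -/
lemma ac_of_dist_le {X Y : Type*} [PseudoMetricSpace X] [PseudoMetricSpace Y]
    {f : ℝ → X} {g : ℝ → Y} {a b K : ℝ} (hf : AbsolutelyContinuousOnInterval f a b)
    (h : ∀ x ∈ Set.uIcc a b, ∀ z ∈ Set.uIcc a b, dist (g x) (g z) ≤ K * dist (f x) (f z)) :
    AbsolutelyContinuousOnInterval g a b := by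
  unfold AbsolutelyContinuousOnInterval at hf ⊢
  apply squeeze_zero' ?_ ?_ (by simpa using hf.const_mul K)
  · exact Eventually.of_forall fun _ => Finset.sum_nonneg fun i hi => dist_nonneg
  rw [eventually_inf_principal]
  filter_upwards with E hE
  rw [Finset.mul_sum]
  exact Finset.sum_le_sum fun i hi => h _ (hE.1 i hi).1 _ (hE.1 i hi).2

lemma LocACOn.sub_eq {f f' : ℝ → ℂ} (h : LocACOn f f' 0) {x z : ℝ} (hx : 0 ≤ x) (hz : 0 ≤ z) :
    f z - f x = ∫ t in x..z, f' t := by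
  rw [h.2 x hx, h.2 z hz, add_sub_add_left_eq_sub,
    intervalIntegral.integral_interval_sub_left (h.1 z hz) (h.1 x hx)]

lemma LocACOn.ac {f f' : ℝ → ℂ} (h : LocACOn f f' 0) {b : ℝ} (hb : 0 ≤ b) :
    AbsolutelyContinuousOnInterval f 0 b := by
  -- The increments of `f` are dominated by those of the indefinite integral of `‖f'‖`.
  refine ac_of_dist_le (K := 1)
    ((h.1 b hb).norm.absolutelyContinuousOnInterval_intervalIntegral Set.left_mem_uIcc) ?_
  intro x hx z hz
  rw [Set.uIcc_of_le hb] at hx hz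
  rw [dist_comm, dist_eq_norm, h.sub_eq hx.1 hz.1, one_mul, dist_comm, Real.dist_eq,
    intervalIntegral.integral_interval_sub_left (h.1 z hz.1).norm (h.1 x hx.1).norm]
  exact intervalIntegral.norm_integral_le_abs_integral_norm

lemma LocACOn.continuousOn {f f' : ℝ → ℂ} (h : LocACOn f f' 0) :
    ContinuousOn f (Set.Ici 0) := by
  intro x hx
  have h1 := (h.ac (b := x + 1) (by linarith [Set.mem_Ici.1 hx])).continuousOn x
    (by rw [Set.uIcc_of_le (by linarith [Set.mem_Ici.1 hx])]; exact ⟨hx, by linarith⟩)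
  refine h1.mono_of_mem_nhdsWithin ?_
  rw [Set.uIcc_of_le (by linarith [Set.mem_Ici.1 hx]), ← Set.Ici_inter_Iic]
  exact inter_mem self_mem_nhdsWithin (mem_nhdsWithin_of_mem_nhds (Iic_mem_nhds (by linarith)))

lemma LocACOn.ae_hasDerivAt {f f' : ℝ → ℂ} (h : LocACOn f f' 0) {b : ℝ} (hb : 0 ≤ b) :
    ∀ᵐ x : ℝ, x ∈ Set.Ioo 0 b → HasDerivAt f (f' x) x := by
  filter_upwards [(h.1 b hb).ae_hasDerivAt_integral] with x hx hxb
  have h1 := hx (by rw [Set.uIcc_of_le hb]; exact ⟨hxb.1.le, hxb.2.le⟩) 0 Set.left_mem_uIcc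
  refine (h1.const_add (f 0)).congr_of_eventuallyEq ?_
  filter_upwards [Ioi_mem_nhds hxb.1] with t ht using h.2 t (le_of_lt ht)

/-- A nonzero function `u` cannot be square integrable on `[0,∞)` if the energy
`∫₀ˣ (u² + v²)` is, up to a positive factor, at most `u v`. -/
lemma not_integrableOn_of_energy {u v : ℝ → ℝ} (hu : Continuous u) (hv : Continuous v)
    {C x₀ : ℝ} (hC : 0 < C) (hx₀ : 0 ≤ x₀) (hux : u x₀ ≠ 0)
    (hE : ∀ x, 0 ≤ x → C * ∫ t in 0..x, (u t ^ 2 + v t ^ 2) ≤ u x * v x) :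
    ¬ IntegrableOn (fun x => u x ^ 2) (Set.Ici (0 : ℝ)) volume := by
  intro hInt
  set h : ℝ → ℝ := fun t => u t ^ 2 + v t ^ 2 with hh
  have hhc : Continuous h := by fun_prop
  have huc : Continuous fun t => u t ^ 2 := by fun_prop
  set H : ℝ → ℝ := fun x => ∫ t in 0..x, h t with hH
  have hHpos : ∀ x, x₀ + 1 ≤ x → 0 < H x := fun x hx =>
    intervalIntegral.integral_pos (by linarith) hhc.continuousOn (fun t _ => by positivity)
      ⟨x₀, ⟨hx₀, by linarith⟩, by positivity⟩
  have hHd : ∀ x, HasDerivAt H (h x) x := fun x => (hhc.integral_hasStrictDerivAt 0 x).hasDerivAt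
  have hUd : ∀ x, HasDerivAt (fun x => ∫ t in 0..x, u t ^ 2) (u x ^ 2) x :=
    fun x => (huc.integral_hasStrictDerivAt 0 x).hasDerivAt
  -- `W` grows at least linearly, while it is bounded above by `∫₀^∞ u²`.
  set W : ℝ → ℝ := fun x => (∫ t in 0..x, u t ^ 2) - (C ^ 2)⁻¹ * (H x)⁻¹ with hW
  have hWd : ∀ x, x₀ + 1 ≤ x →
      HasDerivAt W (u x ^ 2 - (C ^ 2)⁻¹ * (-h x / H x ^ 2)) x := fun x hx =>
    (hUd x).sub (((hHd x).fun_inv (hHpos x hx).ne').const_mul _)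
  have hW2 : ∀ x, x₀ + 1 ≤ x → 2 ≤ u x ^ 2 - (C ^ 2)⁻¹ * (-h x / H x ^ 2) := by
    intro x hx
    have hp := hHpos x hx
    have hCH : 0 < C * H x := by positivity
    have h1 : C * H x ≤ u x * v x := hE x (by linarith)
    have h2 : u x ≠ 0 := by rintro h0; rw [h0] at h1; linarith
    have h3 : (C * H x) ^ 2 ≤ u x ^ 2 * h x := by
      have : (C * H x) ^ 2 ≤ (u x * v x) ^ 2 := by gcongr
      nlinarith [sq_nonneg (u x ^ 2)]
    have h4 : (u x ^ 2)⁻¹ ≤ h x / (C * H x) ^ 2 := by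
      rw [inv_eq_one_div, div_le_div_iff₀ (by positivity) (by positivity)]; linarith
    have h5 : u x ^ 2 - (C ^ 2)⁻¹ * (-h x / H x ^ 2) = u x ^ 2 + h x / (C * H x) ^ 2 := by
      field_simp; ring
    have h6 : 2 ≤ u x ^ 2 + (u x ^ 2)⁻¹ := by
      have : 0 < u x ^ 2 := by positivity
      rw [← sub_nonneg, show u x ^ 2 + (u x ^ 2)⁻¹ - 2 = (u x ^ 2 - 1) ^ 2 / u x ^ 2 by
        field_simp; ring]
      positivity
    linarith
  set M := ∫ t in Set.Ici (0 : ℝ), u t ^ 2 with hM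
  have hWM : ∀ x, x₀ + 1 ≤ x → W x ≤ M := by
    intro x hx
    have h1 : ∫ t in 0..x, u t ^ 2 ≤ M := by
      rw [intervalIntegral.integral_of_le (by linarith)]
      exact MeasureTheory.setIntegral_mono_set hInt (Eventually.of_forall fun t => by positivity)
        (Eventually.of_forall fun t ht => le_of_lt ht.1)
    have h2 := hHpos x hx
    have : 0 ≤ (C ^ 2)⁻¹ * (H x)⁻¹ := by positivity
    simp only [hW]; linarith
  have key : ∀ x, x₀ + 1 ≤ x → 2 * (x - (x₀ + 1)) ≤ W x - W (x₀ + 1) := by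
    intro x hx
    refine (convex_Ici (x₀ + 1)).mul_sub_le_image_sub_of_le_deriv
      (fun t ht => (hWd t ht).continuousAt.continuousWithinAt) ?_ ?_ _ Set.self_mem_Ici x hx hx
    · rw [interior_Ici]
      exact fun t ht => (hWd t (le_of_lt ht)).differentiableAt.differentiableWithinAt
    · rw [interior_Ici]
      intro t ht
      rw [(hWd t (le_of_lt ht)).deriv]
      exact hW2 t (le_of_lt ht)
  have h0 := hWM (x₀ + 1) le_rfl
  have h1 := key (x₀ + 2 + (M - W (x₀ + 1))) (by linarith)
  have h2 := hWM (x₀ + 2 + (M - W (x₀ + 1))) (by linarith)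
  linarith

lemma mem_slitPlane_of_PiSector {z : ℂ} {κ : ℝ} (hκ : 0 ≤ κ) (hz : z ∈ PiSector κ) :
    z ∈ slitPlane :=
  mem_slitPlane_iff_arg.2 ⟨by linarith [hz.2.2], hz.1⟩

lemma sqrtQ_sq (q : ℝ → ℂ) (x : ℝ) : sqrtQ q x ^ 2 = q x := by
  unfold sqrtQ
  rw [one_div]
  exact_mod_cast cpow_nat_inv_pow (q x) two_ne_zero

lemma hasDerivAt_sqrtQ {q q' : ℝ → ℂ} {x : ℝ} (hq : HasDerivAt q (q' x) x)
    (hs : q x ∈ slitPlane) : HasDerivAt (sqrtQ q) (sqrtQD q q' x) x := by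
  have h1 := ((hasDerivAt_id (q x)).cpow_const (c := (1 : ℂ) / 2) hs).scomp x hq
  refine h1.congr_deriv ?_
  have h0 : q x ≠ 0 := slitPlane_ne_zero hs
  have hp : sqrtQ q x ≠ 0 := fun h => h0 (by rw [← sqrtQ_sq q x, h]; simp)
  have h2 : (q x) ^ ((1 : ℂ) / 2 - 1) = (sqrtQ q x)⁻¹ := by
    rw [sqrtQ, ← cpow_neg]; norm_num
  simp only [sqrtQD, id, smul_eq_mul, h2]
  field_simp

/-- `1 / √q` is absolutely continuous on compact intervals, since
`p(x) - p(z) = (q(x) - q(z)) / (p(x) + p(z))` and `Re p` is bounded below there. -/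
lemma ac_inv_sqrtQ {q : ℝ → ℂ} {b : ℝ} (hb : 0 ≤ b)
    (hq : AbsolutelyContinuousOnInterval q 0 b)
    (hs : ∀ x, 0 ≤ x → q x ∈ slitPlane) (hre : ∀ x, 0 ≤ x → 0 < (sqrtQ q x).re) :
    AbsolutelyContinuousOnInterval (fun x => (sqrtQ q x)⁻¹) 0 b := by
  have hpc : ContinuousOn (sqrtQ q) (Set.uIcc 0 b) :=
    hq.continuousOn.cpow_const fun x hx => hs x (by rw [Set.uIcc_of_le hb] at hx; exact hx.1)
  obtain ⟨m, hm, hmin⟩ := isCompact_uIcc.exists_isMinOn Set.nonempty_uIcc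
    (continuous_re.comp_continuousOn hpc)
  rw [Set.uIcc_of_le hb] at hm
  set c := (sqrtQ q m).re with hc
  have hc0 : 0 < c := hre m hm.1
  have hcn : ∀ x ∈ Set.uIcc 0 b, c ≤ (sqrtQ q x).re := fun x hx => hmin hx
  refine ac_of_dist_le (K := (c ^ 3)⁻¹) hq fun x hx z hz => ?_
  have h1 : c ≤ ‖sqrtQ q x‖ := (hcn x hx).trans (re_le_norm _)
  have h2 : c ≤ ‖sqrtQ q z‖ := (hcn z hz).trans (re_le_norm _)
  have h3 : c ≤ ‖sqrtQ q x + sqrtQ q z‖ := by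
    refine le_trans ?_ (re_le_norm _)
    rw [add_re]; linarith [hcn x hx, hcn z hz]
  have n1 : sqrtQ q x ≠ 0 := norm_pos_iff.1 (hc0.trans_le h1)
  have n2 : sqrtQ q z ≠ 0 := norm_pos_iff.1 (hc0.trans_le h2)
  have n3 : sqrtQ q x + sqrtQ q z ≠ 0 := norm_pos_iff.1 (hc0.trans_le h3)
  have h4 : (sqrtQ q x)⁻¹ - (sqrtQ q z)⁻¹ =
      -(q x - q z) / (sqrtQ q x * sqrtQ q z * (sqrtQ q x + sqrtQ q z)) := by
    rw [← sqrtQ_sq q x, ← sqrtQ_sq q z]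
    field_simp; ring
  rw [dist_eq_norm, dist_eq_norm, h4, norm_div, norm_neg, norm_mul, norm_mul, inv_mul_eq_div]
  gcongr
  calc c ^ 3 = c * c * c := by ring
    _ ≤ _ := by gcongr

/-- The pointwise lower bound for the derivative of `Re (ȳ y' / p)`; here `p`, `d` are the values
of `√q` and its derivative, `a`, `b` those of `y` and `y'`. -/
lemma energy_pointwise {p d a b : ℂ} {C : ℝ} (hp : p ≠ 0)
    (hC : C + (1 / 2) * ‖d / p‖ ≤ p.re) :
    C * (‖a‖ ^ 2 + ‖b / p‖ ^ 2) ≤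
      ((star b * b + star a * (p ^ 2 * a)) * p⁻¹ + star a * b * (-d / p ^ 2)).re := by
  obtain ⟨s, rfl⟩ : ∃ s, b = p * s := ⟨b / p, by field_simp⟩
  have h1 : (star (p * s) * (p * s) + star a * (p ^ 2 * a)) * p⁻¹ + star a * (p * s) * (-d / p ^ 2)
      = star p * (star s * s) + p * (star a * a) - (d / p) * (star a * s) := by
    rw [star_mul']; field_simp; ring
  have hn : ∀ z : ℂ, star z * z = ((‖z‖ ^ 2 : ℝ) : ℂ) := fun z => by
    rw [ofReal_pow]; exact conj_mul' z
  have h2 : ((d / p) * (star a * s)).re ≤ ‖d / p‖ * (‖a‖ * ‖s‖) := by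
    refine (re_le_norm _).trans_eq ?_
    rw [norm_mul, norm_mul, norm_star]
  rw [h1, hn, hn, mul_div_cancel_left₀ _ hp, sub_re, add_re, re_mul_ofReal, re_mul_ofReal,
    show (star p).re = p.re from conj_re p]
  have h3 : ‖d / p‖ * (‖a‖ * ‖s‖) ≤ (1 / 2 * ‖d / p‖) * (‖a‖ ^ 2 + ‖s‖ ^ 2) := by
    nlinarith [mul_nonneg (norm_nonneg (d / p)) (sq_nonneg (‖a‖ - ‖s‖))]
  nlinarith [mul_le_mul_of_nonneg_right hC (show 0 ≤ ‖a‖ ^ 2 + ‖s‖ ^ 2 by positivity)]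

/-- If `q` satisfies condition A for `x ≥ 0` and `y` is a nontrivial solution of
`-y'' + q y = 0` with `y(0) = 0` or `y'(0) = 0`, then `y ∉ L₂(ℝ₊)`. -/
theorem statement5 (q q' : ℝ → ℂ) (C : ℝ) (hA : CondA q q' 0 C)
    (y y' : ℝ → ℂ) (hy : IsSol q 0 y y') (hnt : NontrivialSol y)
    (hbc : y 0 = 0 ∨ y' 0 = 0) :
    ¬ IntegrableOn (fun x => ‖y x‖ ^ 2) (Set.Ici (0:ℝ)) volume := by
  obtain ⟨-, hq, ⟨κ, hκ, hsec⟩, hre, hC, hineq⟩ := hA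
  obtain ⟨hy1, hy2⟩ := hy
  obtain ⟨x₀, hx₀, hyx₀⟩ := hnt
  have hs : ∀ x, 0 ≤ x → q x ∈ slitPlane := fun x hx => mem_slitPlane_of_PiSector hκ (hsec x hx)
  have hp0 : ∀ x, 0 ≤ x → sqrtQ q x ≠ 0 := fun x hx h => by simpa [h] using hre x hx
  have hpc : ContinuousOn (sqrtQ q) (Set.Ici 0) := hq.continuousOn.cpow_const hs
  have hvc : ContinuousOn (fun x => y' x / sqrtQ q x) (Set.Ici 0) :=
    hy2.continuousOn.div hpc hp0
  -- Composing with `max · 0` gives functions continuous on all of `ℝ`.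
  have hmax : Continuous fun x : ℝ => max x 0 := by fun_prop
  have hu : Continuous fun x : ℝ => ‖y (max x 0)‖ :=
    (hy1.continuousOn.comp_continuous hmax fun x => le_max_right x 0).norm
  have hv : Continuous fun x : ℝ => ‖y' (max x 0) / sqrtQ q (max x 0)‖ :=
    (hvc.comp_continuous hmax fun x => le_max_right x 0).norm
  have hmain := not_integrableOn_of_energy hu hv hC hx₀ (by simpa [max_eq_left hx₀] using hyx₀) ?_
  · intro hInt
    refine hmain (hInt.congr_fun (fun x hx => ?_) measurableSet_Ici)
    simp only [max_eq_left (Set.mem_Ici.1 hx)]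
  intro X hX
  set S : ℝ → ℝ := fun x => (star (y x) * y' x * (sqrtQ q x)⁻¹).re with hS
  have hSac : AbsolutelyContinuousOnInterval S 0 X := by
    have h1 : AbsolutelyContinuousOnInterval (fun x => star (y x)) 0 X :=
      ac_of_dist_le (K := 1) (hy1.ac hX) fun x _ z _ => by
        rw [one_mul, dist_eq_norm, ← star_sub, norm_star, dist_eq_norm]
    have h2 := (h1.fun_smul (hy2.ac hX)).fun_smul (ac_inv_sqrtQ hX (hq.ac hX) hs hre)
    refine ac_of_dist_le (K := 1) h2 fun x _ z _ => ?_
    rw [one_mul, dist_eq_norm, dist_eq_norm]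
    simp only [hS, smul_eq_mul, ← sub_re, Real.norm_eq_abs]
    exact abs_re_le_norm _
  have hS0 : S 0 = 0 := by
    rcases hbc with h | h <;> simp [hS, h]
  have hSX : S X ≤ ‖y X‖ * ‖y' X / sqrtQ q X‖ := by
    refine (re_le_norm _).trans_eq ?_
    rw [norm_mul, norm_mul, norm_star, norm_div, norm_inv, mul_assoc, div_eq_mul_inv]
  have hInt : ∫ x in 0..X, C * (‖y (max x 0)‖ ^ 2 + ‖y' (max x 0) / sqrtQ q (max x 0)‖ ^ 2) ≤
      ∫ x in 0..X, deriv S x := by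
    refine intervalIntegral.integral_mono_ae_restrict hX
      (Continuous.intervalIntegrable (by fun_prop) _ _) hSac.intervalIntegrable_deriv ?_
    rw [EventuallyLE, ae_restrict_congr_set Ioo_ae_eq_Icc.symm, ae_restrict_iff' measurableSet_Ioo]
    filter_upwards [hy1.ae_hasDerivAt hX, hy2.ae_hasDerivAt hX, hq.ae_hasDerivAt hX, hineq]
      with x d1 d2 d3 hx hxX
    have hx0 : 0 ≤ x := hxX.1.le
    have hr := (hasDerivAt_sqrtQ (d3 hxX) (hs x hx0)).fun_inv (hp0 x hx0)
    have hd := (((d1 hxX).star.mul (d2 hxX)).mul hr)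
    have hd' := reCLM.hasFDerivAt.comp_hasDerivAt x hd
    have hd2 : HasDerivAt S _ x := hd'
    rw [hd2.deriv, max_eq_left hx0]
    refine (energy_pointwise (hp0 x hx0) (hx hx0)).trans_eq ?_
    simp [sqrtQ_sq]
  rw [hSac.integral_deriv_eq_sub, hS0, sub_zero, intervalIntegral.integral_const_mul] at hInt
  simpa only [max_eq_left hX] using hInt.trans hSX
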